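/- Let φ : R → S be a ring homomorphism between commutative Noetherian rings making S flat as an R-module, and let M and N be R-modules with M finitely generated. If Ext^i_R(M,N) = 0 for all i ≥ 1, then for every i ≥ 0 there is an isomorphism of R-modules Ext^i_R(S ⊗_R M, N) ≅ Ext^i_R(S, Hom_R(M,N)). -/

import Mathlib

/-!
Let `0 → K → F → S → 0` be a free presentation. Since `S` is flat, so is `K`, and
`0 → K ⊗ M → F ⊗ M → S ⊗ M → 0` is exact. The middle term of this sequence has no higher `Ext`
into `N`: for a presentation `0 → L → Q → M → 0` with `Q` free, the vanishing of `Ext^1(M, N)` says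
that maps `L → N` extend to `Q`, a property that survives tensoring with the projective module `F`,
and higher degrees reduce to this one because `L` inherits the hypothesis on `M`.

Consequently both `Ext^{n+1}(S ⊗ M, N)` and `Ext^{n+1}(S, Hom(M, N))` are computed from `K` by
dimension shifting. In degree one they are the cokernels of restriction from `F` to `K` on
`Hom(- ⊗ M, N)` and on `Hom(-, Hom(M, N))`, which agree by the tensor-hom adjunction. In higher
degrees they are `Ext^n(K ⊗ M, N)` and `Ext^n(K, Hom(M, N))`, so an induction on the degree over
all flat modules applies.
-/

universe u

open CategoryTheory TensorProduct

/-- `Ext^i_R(M, N)` as an object of `ModuleCat R`. -/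
noncomputable def extModule (R : Type u) [CommRing R] (M N : Type u) [AddCommGroup M]
    [Module R M] [AddCommGroup N] [Module R N] (i : ℕ) : ModuleCat.{u} R :=
  ((Ext R (ModuleCat.{u} R) i).obj (Opposite.op (ModuleCat.of R M))).obj (ModuleCat.of R N)

universe v w t

section DerivedFunctorComparison

variable {R : Type t} [Ring R] {C : Type u} [Category.{v} C] [Abelian C] [Linear R C]

instance preservesLimits_linearYoneda_obj (Y : C) :
    Limits.PreservesLimits ((linearYoneda R C).obj Y) :=
  have : Limits.PreservesLimits ((linearYoneda R C).obj Y ⋙ forget (ModuleCat.{v} R)) :=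
    inferInstanceAs (Limits.PreservesLimits (yoneda.obj Y))
  Limits.preservesLimits_of_reflects_of_preserves _ (forget _)

variable [HasExt.{w} C]

lemma smul_extMk {X Y : C} (P : ProjectiveResolution X) {n m : ℕ} (hm : n + 1 = m) (r : R)
    (f : P.complex.X n ⟶ Y) (hf : P.complex.d m n ≫ f = 0) :
    r • P.extMk f m hm hf =
      P.extMk (r • f) m hm (by rw [Linear.comp_smul, hf, smul_zero]) := by
  simp only [Abelian.Ext.smul_eq_comp_mk₀, P.extMk_comp_mk₀, Linear.comp_smul, Category.comp_id]

variable (R) in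
/-- The segment of the complex `Hom(P, Y)` around degree `n + 1`, for `P` a projective
resolution of `X`. -/
noncomputable abbrev homShortComplex {X : C} (P : ProjectiveResolution X) (Y : C) (n : ℕ) :
    ShortComplex (ModuleCat.{v} R) :=
  (P.complex.linearYonedaObj R Y).sc' n (n + 1) (n + 2)

variable (R) in
/-- The class in `Ext^{n+1}(X, Y)` of a cocycle of `Hom(P, Y)`, for `P` a projective
resolution of `X`. -/
noncomputable def extClassOfCocycle {X : C} (P : ProjectiveResolution X) (Y : C) (n : ℕ) :
    LinearMap.ker (homShortComplex R P Y n).g.hom →ₗ[R] Abelian.Ext X Y (n + 1) where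
  toFun f := P.extMk f.1 (n + 2) rfl f.2
  map_add' f g := (P.add_extMk f.1 g.1 (n + 2) rfl f.2 g.2).symm
  map_smul' r f := (smul_extMk P rfl r f.1 f.2).symm

lemma extClassOfCocycle_surjective {X : C} (P : ProjectiveResolution X) (Y : C) (n : ℕ) :
    Function.Surjective (extClassOfCocycle R P Y n) := fun x =>
  have ⟨f, hf, hx⟩ := P.extMk_surjective x (n + 2) rfl
  ⟨⟨f, hf⟩, hx⟩

lemma ker_extClassOfCocycle {X : C} (P : ProjectiveResolution X) (Y : C) (n : ℕ) :
    LinearMap.ker (extClassOfCocycle R P Y n) =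
      LinearMap.range (homShortComplex R P Y n).moduleCatToCycles := by
  ext f
  exact (P.extMk_eq_zero_iff f.1 (n + 2) rfl f.2 n rfl).trans
    (exists_congr fun _ => ⟨fun h => Subtype.ext h, fun h => congrArg Subtype.val h⟩)

variable [EnoughProjectives C]

/-- The degree zero case of `extLinearEquivAbelianExt`. -/
noncomputable def extZeroLinearEquivAbelianExt (X Y : C) :
    ((Ext R C 0).obj (Opposite.op X)).obj Y ≃ₗ[R] Abelian.Ext X Y 0 :=
  have := Limits.preservesFiniteColimits_rightOp ((linearYoneda R C).obj Y)
  (((linearYoneda R C).obj Y).rightOp.leftDerivedZeroIsoSelf.app X).unop.symm.toLinearEquiv ≪≫ₗ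
    Abelian.Ext.linearEquiv₀.symm

/-- The positive degree case of `extLinearEquivAbelianExt`. -/
noncomputable def extSuccLinearEquivAbelianExt (X Y : C) (n : ℕ) :
    ((Ext R C (n + 1)).obj (Opposite.op X)).obj Y ≃ₗ[R] Abelian.Ext X Y (n + 1) :=
  let P := projectiveResolution X
  (P.isoExt (n + 1) Y ≪≫
      ShortComplex.homologyMapIso ((P.complex.linearYonedaObj R Y).isoSc' n (n + 1) (n + 2)
        (by simp) (by simp)) ≪≫
      (homShortComplex R P Y n).moduleCatHomologyIso).toLinearEquiv ≪≫ₗ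
    Submodule.quotEquivOfEq _ _ (ker_extClassOfCocycle P Y n).symm ≪≫ₗ
    (extClassOfCocycle R P Y n).quotKerEquivOfSurjective (extClassOfCocycle_surjective P Y n)

/-- The left derived functors of `Hom(-, Y)` agree with the `Ext` groups defined by the derived
category. Only the latter come with long exact sequences in the library. -/
noncomputable def extLinearEquivAbelianExt (X Y : C) :
    ∀ n : ℕ, ((Ext R C n).obj (Opposite.op X)).obj Y ≃ₗ[R] Abelian.Ext X Y n
  | 0 => extZeroLinearEquivAbelianExt X Y
  | n + 1 => extSuccLinearEquivAbelianExt X Y n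

end DerivedFunctorComparison

section DimensionShifting

open Abelian

variable {R : Type t} [CommRing R] {C : Type u} [Category.{v} C] [Abelian C] [Linear R C]
  [HasExt.{w} C] {T : ShortComplex C}

lemma precomp_extClass_surjective (hT : T.ShortExact) (Y : C) (n : ℕ)
    [Subsingleton (Ext T.X₂ Y (n + 1))] :
    Function.Surjective (hT.extClass.precompOfLinear R Y (add_comm 1 n)) := fun x =>
  Ext.contravariant_sequence_exact₃ hT Y x (Subsingleton.elim _ _) (add_comm 1 n)

lemma precomp_extClass_injective (hT : T.ShortExact) (Y : C) (n : ℕ)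
    [Subsingleton (Ext T.X₂ Y n)] :
    Function.Injective (hT.extClass.precompOfLinear R Y (add_comm 1 n)) := by
  rw [injective_iff_map_eq_zero]
  intro x hx
  obtain ⟨y, rfl⟩ := Ext.contravariant_sequence_exact₁ hT Y x (add_comm 1 n) hx
  rw [Subsingleton.elim y 0, Ext.comp_zero]

variable (R) in
/-- Dimension shifting along the connecting map `Ext^n(X₁, Y) → Ext^{n+1}(X₃, Y)`. -/
noncomputable def extLinearEquivExtSucc (hT : T.ShortExact) (Y : C) (n : ℕ)
    [Subsingleton (Ext T.X₂ Y n)] [Subsingleton (Ext T.X₂ Y (n + 1))] :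
    Ext T.X₁ Y n ≃ₗ[R] Ext T.X₃ Y (n + 1) :=
  .ofBijective _ ⟨precomp_extClass_injective hT Y n, precomp_extClass_surjective hT Y n⟩

variable (R) in
/-- The connecting map `Hom(X₁, Y) → Ext^1(X₃, Y)`. -/
noncomputable def homToExtOne (hT : T.ShortExact) (Y : C) : (T.X₁ ⟶ Y) →ₗ[R] Ext T.X₃ Y 1 :=
  hT.extClass.precompOfLinear R Y (add_zero 1) ∘ₗ Ext.linearEquiv₀.symm.toLinearMap

lemma ker_homToExtOne (hT : T.ShortExact) (Y : C) :
    LinearMap.ker (homToExtOne R hT Y) = LinearMap.range (Linear.leftComp R Y T.f) := by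
  ext φ
  constructor
  · intro hφ
    obtain ⟨x, hx⟩ := Ext.contravariant_sequence_exact₁ hT Y (Ext.mk₀ φ) (add_zero 1) hφ
    obtain ⟨ψ, rfl⟩ := (Ext.mk₀_bijective _ _).2 x
    rw [Ext.mk₀_comp_mk₀] at hx
    exact ⟨ψ, (Ext.mk₀_bijective _ _).1 hx⟩
  · rintro ⟨ψ, rfl⟩
    change hT.extClass.comp (Ext.mk₀ (T.f ≫ ψ)) (add_zero 1) = 0
    rw [← Ext.mk₀_comp_mk₀, hT.extClass_comp_assoc]

variable (R) in
/-- `Ext^1(X₃, Y)` as the cokernel of restriction along `X₁ ⟶ X₂`. -/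
noncomputable def quotRangeLinearEquivExtOne (hT : T.ShortExact) (Y : C)
    [Subsingleton (Ext T.X₂ Y 1)] :
    ((T.X₁ ⟶ Y) ⧸ LinearMap.range (Linear.leftComp R Y T.f)) ≃ₗ[R] Ext T.X₃ Y 1 :=
  Submodule.quotEquivOfEq _ _ (ker_homToExtOne hT Y).symm ≪≫ₗ
    (homToExtOne R hT Y).quotKerEquivOfSurjective
      ((precomp_extClass_surjective (R := R) hT Y 0).comp Ext.linearEquiv₀.symm.surjective)

variable (R) in
lemma subsingleton_ext_one_iff (hT : T.ShortExact) (Y : C)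
    [Subsingleton (Ext T.X₂ Y 1)] :
    Subsingleton (Ext T.X₃ Y 1) ↔ Function.Surjective (Linear.leftComp R Y T.f) := by
  rw [← (quotRangeLinearEquivExtOne R hT Y).toEquiv.subsingleton_congr,
    Submodule.Quotient.subsingleton_iff, LinearMap.range_eq_top]

end DimensionShifting

section Tensor

open MonoidalCategory

variable {R : Type u} [CommRing R]

lemma flat_of_exact_of_flat {A B C : Type u} [AddCommGroup A] [Module R A] [AddCommGroup B]
    [Module R B] [AddCommGroup C] [Module R C] [Module.Flat R B] [Module.Flat R C]
    {f : A →ₗ[R] B} {g : B →ₗ[R] C} (hf : Function.Injective f) (hfg : Function.Exact f g)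
    (hg : Function.Surjective g) : Module.Flat R A := by
  rw [Module.Flat.iff_rTensor_preserves_injective_linearMap]
  intro X Y _ _ _ _ i hi
  have hX : Function.Injective (f.lTensor X) :=
    LinearMap.lTensor_injective_of_exact_of_flat g hg f hf hfg X
  have hB : Function.Injective (i.rTensor B) :=
    Module.Flat.rTensor_preserves_injective_linearMap i hi
  have comm : i.rTensor B ∘ₗ f.lTensor X = f.lTensor Y ∘ₗ i.rTensor A := by
    rw [LinearMap.rTensor_comp_lTensor, LinearMap.lTensor_comp_rTensor]
  refine Function.Injective.of_comp (f := f.lTensor Y) ?_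
  rw [← LinearMap.coe_comp, ← comm]
  exact hB.comp hX

lemma flat_X₁_of_shortExact {T : ShortComplex (ModuleCat.{u} R)} (hT : T.ShortExact)
    [Module.Flat R T.X₂] [Module.Flat R T.X₃] : Module.Flat R T.X₁ :=
  flat_of_exact_of_flat hT.moduleCat_injective_f
    ((ShortComplex.ShortExact.moduleCat_exact_iff_function_exact T).1 hT.exact)
    hT.moduleCat_surjective_g

lemma shortExact_map_tensorRight_of_flat {T : ShortComplex (ModuleCat.{u} R)} (hT : T.ShortExact)
    [Module.Flat R T.X₃] (M : ModuleCat.{u} R) : (T.map (tensorRight M)).ShortExact := by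
  have hfg := (ShortComplex.ShortExact.moduleCat_exact_iff_function_exact T).1 hT.exact
  refine ModuleCat.shortComplex_shortExact _
    (rTensor_exact M hfg hT.moduleCat_surjective_g) ?_
    (LinearMap.rTensor_surjective M hT.moduleCat_surjective_g)
  exact (LinearMap.lTensor_inj_iff_rTensor_inj M T.f.hom).1
    (LinearMap.lTensor_injective_of_exact_of_flat T.g.hom hT.moduleCat_surjective_g T.f.hom
      hT.moduleCat_injective_f hfg M)

/-- The tensor-hom adjunction. -/
def tensorHomLinearEquiv (S M N : ModuleCat.{u} R) :
    ((tensorRight M).obj S ⟶ N) ≃ₗ[R] (S ⟶ ModuleCat.of R (M →ₗ[R] N)) :=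
  ModuleCat.homLinearEquiv (S := R) (M := ModuleCat.of R (S ⊗[R] M)) ≪≫ₗ
    (TensorProduct.lift.equiv (.id R) S M N).symm ≪≫ₗ
    (ModuleCat.homLinearEquiv (S := R) (N := ModuleCat.of R (M →ₗ[R] N))).symm

lemma tensorHomLinearEquiv_naturality {S S' : ModuleCat.{u} R} (f : S ⟶ S') {M N : ModuleCat.{u} R}
    (φ : (tensorRight M).obj S' ⟶ N) :
    tensorHomLinearEquiv S M N ((tensorRight M).map f ≫ φ) =
      f ≫ tensorHomLinearEquiv S' M N φ := by
  rfl

lemma map_tensorHomLinearEquiv_range_leftComp {S S' : ModuleCat.{u} R} (f : S ⟶ S')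
    (M N : ModuleCat.{u} R) :
    (LinearMap.range (Linear.leftComp R N ((tensorRight M).map f))).map
        (tensorHomLinearEquiv S M N).toLinearMap =
      LinearMap.range (Linear.leftComp R (ModuleCat.of R (M →ₗ[R] N)) f) := by
  ext ψ
  constructor
  · rintro ⟨_, ⟨φ, rfl⟩, rfl⟩
    exact ⟨tensorHomLinearEquiv S' M N φ, (tensorHomLinearEquiv_naturality f φ).symm⟩
  · rintro ⟨ψ, rfl⟩
    obtain ⟨φ, rfl⟩ := (tensorHomLinearEquiv S' M N).surjective ψ
    exact ⟨_, ⟨φ, rfl⟩, tensorHomLinearEquiv_naturality f φ⟩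

/-- The tensor-hom adjunction on the cokernels of restriction along `f`. -/
def quotRangeTensorHomLinearEquiv {S S' : ModuleCat.{u} R} (f : S ⟶ S') (M N : ModuleCat.{u} R) :
    (((tensorRight M).obj S ⟶ N) ⧸ LinearMap.range (Linear.leftComp R N ((tensorRight M).map f)))
      ≃ₗ[R] ((S ⟶ ModuleCat.of R (M →ₗ[R] N)) ⧸
        LinearMap.range (Linear.leftComp R (ModuleCat.of R (M →ₗ[R] N)) f)) :=
  Submodule.Quotient.equiv _ _ (tensorHomLinearEquiv S M N)
    (map_tensorHomLinearEquiv_range_leftComp f M N)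

lemma leftComp_surjective_iff {A B : ModuleCat.{u} R} (f : A ⟶ B) (N : ModuleCat.{u} R) :
    Function.Surjective (Linear.leftComp R N f) ↔ Function.Surjective (f.hom.lcomp R N) :=
  ⟨fun h φ => (h (ModuleCat.ofHom φ)).imp' ModuleCat.Hom.hom fun _ => congrArg ModuleCat.Hom.hom,
    fun h φ => (h φ.hom).imp' ModuleCat.ofHom fun _ => ModuleCat.hom_ext⟩

lemma lcomp_lTensor_surjective_of_projective {F A B N : Type*} [AddCommGroup F] [Module R F]
    [Module.Projective R F] [AddCommGroup A] [Module R A] [AddCommGroup B] [Module R B]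
    [AddCommGroup N] [Module R N] {f : A →ₗ[R] B} (hf : Function.Surjective (f.lcomp R N)) :
    Function.Surjective ((f.lTensor F).lcomp R N) := by
  intro φ
  obtain ⟨ψ, hψ⟩ := Module.projective_lifting_property (f.lcomp R N) (TensorProduct.curry φ) hf
  exact ⟨TensorProduct.lift ψ, TensorProduct.ext hψ⟩

lemma leftComp_tensorLeft_map_surjective_of_projective (F : ModuleCat.{u} R)
    [Module.Projective R F] {A B N : ModuleCat.{u} R} {f : A ⟶ B}
    (hf : Function.Surjective (Linear.leftComp R N f)) :
    Function.Surjective (Linear.leftComp R N ((tensorLeft F).map f)) :=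
  (leftComp_surjective_iff _ N).2
    (lcomp_lTensor_surjective_of_projective ((leftComp_surjective_iff f N).1 hf))

lemma projective_tensor (F P : ModuleCat.{u} R) [Module.Projective R F] [Module.Projective R P] :
    Projective (F ⊗ P) :=
  (IsProjective.iff_projective (F ⊗[R] P)).1 inferInstance

end Tensor

section FlatTensor

open MonoidalCategory Abelian

variable {R : Type u} [CommRing R]

lemma subsingleton_ext_tensor_of_projective (F M N : ModuleCat.{u} R) [Module.Projective R F]
    (h : ∀ n, Subsingleton (Ext M N (n + 1))) (n : ℕ) :
    Subsingleton (Ext (F ⊗ M) N (n + 1)) := by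
  let T := M.projectiveShortComplex
  have hT : T.ShortExact := M.shortExact_projectiveShortComplex
  have hFT : (T.map (tensorLeft F)).ShortExact := hT.map_of_exact _
  have acyclic : ∀ m, Subsingleton (Ext T.X₂ N (m + 1)) :=
    have : Projective T.X₂ := (IsProjective.iff_projective _).1 inferInstance
    Ext.subsingleton_of_projective _ N
  have acyclic_tensor : ∀ m, Subsingleton (Ext (T.map (tensorLeft F)).X₂ N (m + 1)) :=
    have : Projective (T.map (tensorLeft F)).X₂ := projective_tensor F T.X₂
    Ext.subsingleton_of_projective _ N
  cases n with
  | zero =>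
    have restrict : Function.Surjective (Linear.leftComp R N T.f) :=
      (subsingleton_ext_one_iff R hT N).1 (h 0)
    exact (subsingleton_ext_one_iff R hFT N).2
      (leftComp_tensorLeft_map_surjective_of_projective F restrict)
  | succ n =>
    have syzygy (m : ℕ) : Subsingleton (Ext T.X₁ N (m + 1)) :=
      have := h (m + 1)
      (extLinearEquivExtSucc R hT N (m + 1)).subsingleton
    have : Subsingleton (Ext (T.map (tensorLeft F)).X₁ N (n + 1)) :=
      subsingleton_ext_tensor_of_projective F T.X₁ N syzygy n
    exact (extLinearEquivExtSucc R hFT N (n + 1)).symm.subsingleton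
termination_by n

theorem nonempty_ext_tensor_linearEquiv (S M N : ModuleCat.{u} R) [Module.Flat R S]
    (h : ∀ n, Subsingleton (Ext M N (n + 1))) (n : ℕ) :
    Nonempty (Ext (S ⊗ M) N n ≃ₗ[R] Ext S (ModuleCat.of R (M →ₗ[R] N)) n) := by
  induction n generalizing S with
  | zero =>
    exact ⟨Ext.linearEquiv₀ ≪≫ₗ tensorHomLinearEquiv S M N ≪≫ₗ Ext.linearEquiv₀.symm⟩
  | succ n ih =>
    have hT := S.shortExact_projectiveShortComplex
    set T := S.projectiveShortComplex
    have : Module.Flat R T.X₃ := ‹Module.Flat R S›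
    have hTM := shortExact_map_tensorRight_of_flat hT M
    have : Module.Flat R T.X₁ := flat_X₁_of_shortExact hT
    have acyclicF : ∀ m, Subsingleton (Ext T.X₂ (ModuleCat.of R (M →ₗ[R] N)) (m + 1)) :=
      have : Projective T.X₂ := (IsProjective.iff_projective _).1 inferInstance
      Ext.subsingleton_of_projective _ _
    have acyclicFM : ∀ m, Subsingleton (Ext (T.map (tensorRight M)).X₂ N (m + 1)) :=
      subsingleton_ext_tensor_of_projective T.X₂ M N h
    cases n with
    | zero =>
      exact ⟨(quotRangeLinearEquivExtOne R hTM N).symm ≪≫ₗ quotRangeTensorHomLinearEquiv T.f M N ≪≫ₗ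
        quotRangeLinearEquivExtOne R hT _⟩
    | succ n =>
      obtain ⟨e⟩ := ih T.X₁
      exact ⟨(extLinearEquivExtSucc R hTM N (n + 1)).symm ≪≫ₗ e ≪≫ₗ
        extLinearEquivExtSucc R hT _ (n + 1)⟩

/-- `extLinearEquivAbelianExt` for modules. -/
noncomputable def extModuleLinearEquivAbelianExt (M N : Type u) [AddCommGroup M] [Module R M]
    [AddCommGroup N] [Module R N] (i : ℕ) :
    extModule R M N i ≃ₗ[R] Ext (ModuleCat.of R M) (ModuleCat.of R N) i :=
  extLinearEquivAbelianExt _ _ i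

end FlatTensor

theorem ext_baseChange_iso_ext_hom_general (R : Type u) [CommRing R] (S M N : Type u)
    [AddCommGroup S] [Module R S] [Module.Flat R S] [AddCommGroup M] [Module R M]
    [AddCommGroup N] [Module R N] (h : ∀ i : ℕ, 1 ≤ i → Subsingleton (extModule R M N i)) :
    ∀ i : ℕ, Nonempty (extModule R (S ⊗[R] M) N i ≅ extModule R S (M →ₗ[R] N) i) := by
  intro i
  have acyclic (n : ℕ) : Subsingleton (Abelian.Ext (ModuleCat.of R M) (.of R N) (n + 1)) :=
    have := h (n + 1) n.succ_pos
    (extModuleLinearEquivAbelianExt M N (n + 1)).symm.subsingleton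
  obtain ⟨e⟩ := nonempty_ext_tensor_linearEquiv (ModuleCat.of R S) (.of R M) (.of R N) acyclic i
  exact ⟨(extModuleLinearEquivAbelianExt (S ⊗[R] M) N i ≪≫ₗ e ≪≫ₗ
    (extModuleLinearEquivAbelianExt S (M →ₗ[R] N) i).symm).toModuleIso⟩

/-- Let `φ : R → S` be a homomorphism of commutative Noetherian rings making `S` a flat
`R`-module, and let `M`, `N` be `R`-modules with `M` finitely generated. If
`Ext^i_R(M, N) = 0` for all `i ≥ 1`, then for every `i ≥ 0` there is an isomorphism of
`R`-modules `Ext^i_R(S ⊗_R M, N) ≅ Ext^i_R(S, Hom_R(M, N))`. -/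
theorem ext_baseChange_iso_ext_hom
    (R S : Type u) [CommRing R] [CommRing S] [IsNoetherianRing R] [IsNoetherianRing S]
    [Algebra R S] [Module.Flat R S]
    (M N : Type u) [AddCommGroup M] [Module R M] [Module.Finite R M]
    [AddCommGroup N] [Module R N]
    (h : ∀ i : ℕ, 1 ≤ i → Subsingleton (extModule R M N i)) :
    ∀ i : ℕ, Nonempty (extModule R (S ⊗[R] M) N i ≅ extModule R S (M →ₗ[R] N) i) :=
  ext_baseChange_iso_ext_hom_general R S M N h
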